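/- (Identification and finiteness of the limit constant) Let p > 1 and let X be a real random variable with P(X > 0) > 0 whose law is not concentrated on at most two points. Then for every z with max(z*, 0) < z < 1: J_z = −inf_{α ∈ B_z} Λ(α), and J_z ∈ (−∞, 0). -/

import Mathlib

/-!
For `c ≥ 0` put `W_c = c X - (z/p)(|X|^p + (p-1) c^q)` with `q = p/(p-1)`, and let `H_c` be the
half-plane `{c x₁ - (z/p)(x₂ + (p-1) c^q) ≥ 0}`, so that `W_c ≥ 0` means `(X, |X|^p) ∈ H_c`. Every
point of `B_z` lies in some `H_c` (`exists_halfplane`), and by Young's inequality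
`H_c ∩ {x₂ ≥ 0} ⊆ B_z` for `c > 0` (`mem_of_halfplane`). The constant `J_z` is the supremum over `c`
of the Chernoff bounds `inf_t ln E exp(t W_c)`.

*Lower bound on `J_z`.* Testing `Λ(α)` against `λ = t (c, -z/p)` gives `-Λ(α) ≤ ln E exp(t W_c)`
for every `α ∈ H_c` (`neg_rate_le`).

*Upper bound on `J_z`.* Jensen's inequality under a weight `0 ≤ w ≤ exp(t W_c)` with `E[W_c w] = 0`
produces a point of `B_z`, the `w`-barycentre of `(X, |X|^p)`, of rate at most `-ln E[w]`
(`exists_rate_le`).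
If `P(W_c > 0) > 0`, the moment generating function of `W_c` has an interior minimiser, because
`z > z*` gives `W_c` a negative drift, and `w = exp(t W_c)` at this minimiser is optimal
(`hard_of_pos`). Otherwise the infimum is the limit `ln P(W_c = 0)` as `t → ∞`, matched by the
indicator weight of `{W_c = 0}` (`hard_of_null`).

*Finiteness.* For `x₀ > 0` in the support of `X` and `c = x₀^{p-1}`, `W_c` equals
`(1 - z) x₀^p > 0` at `x₀`, so `E exp(t W_c) ≥ P(W_c > 0) > 0` for all `t ≥ 0`.

*Negativity.* For each single `c`, some `t` makes `E exp(t W_c) < 1`; this is uniform in `c` by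
compactness on bounded ranges and, near infinity, by homogeneity: at `t = c^{-q}` the expectation
tends to `exp(-z/q)` (`exists_uniform_mgf_bound`).
-/

open MeasureTheory ProbabilityTheory Real Filter Set
open scoped ENNReal Classical

/-- The cumulant function `A(λ) = ln E exp(λ₁ X + λ₂ |X|^p)` of the vector `(X, |X|^p)`. -/
noncomputable def selfNormCumulant {Ω : Type*} [MeasurableSpace Ω] (P : Measure Ω)
    (X : Ω → ℝ) (p : ℝ) (l : ℝ × ℝ) : EReal :=
  ENNReal.log (∫⁻ ω, ENNReal.ofReal (Real.exp (l.1 * X ω + l.2 * |X ω| ^ p)) ∂P)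

/-- The rate function `Λ(α) = sup_λ (⟨α, λ⟩ − A(λ))` of the vector `(X, |X|^p)`. -/
noncomputable def selfNormRate {Ω : Type*} [MeasurableSpace Ω] (P : Measure Ω)
    (X : Ω → ℝ) (p : ℝ) (α : ℝ × ℝ) : EReal :=
  ⨆ l : ℝ × ℝ, (((α.1 * l.1 + α.2 * l.2 : ℝ) : EReal) - selfNormCumulant P X p l)

/-! ### Tangent half-planes and Young's inequality -/

/-- The exponent `W_c(x) = c x − (z/p)(|x|^p + (p−1) c^{p/(p−1)})` whose Chernoff bound defines
`J_z`; for `c > 0`, the set `{W_c ≥ 0}` is the trace on the curve `(x, |x|^p)` of a half-plane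
tangent to the boundary of `B_z`. -/
noncomputable def chernoffExponent (p z c x : ℝ) : ℝ :=
  c * x - z / p * (|x| ^ p + (p - 1) * c ^ (p / (p - 1)))

/-- Young's inequality in the normalisation of `chernoffExponent`. -/
lemma young_conj {p a c : ℝ} (hp : 1 < p) (ha : 0 ≤ a) (hc : 0 ≤ c) :
    c * a ≤ (a ^ p + (p - 1) * c ^ (p / (p - 1))) / p := by
  have h := Real.young_inequality_of_nonneg ha hc (Real.HolderConjugate.conjExponent hp)
  have hp0 : 0 < p := by linarith
  have hp1 : 0 < p - 1 := by linarith
  rw [Real.conjExponent] at h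
  have e : (a ^ p + (p - 1) * c ^ (p / (p - 1))) / p
      = a ^ p / p + c ^ (p / (p - 1)) / (p / (p - 1)) := by
    field_simp
  rw [e, mul_comm]; exact h

/-- Uniformly for `c` in a bounded range, `W_c(x)` is at most a constant minus a multiple of
`|x|^p`. This supplies every domination and integrability bound below. -/
lemma chernoffExponent_add_le {p z : ℝ} (hp : 1 < p) (hz : 0 < z) (C : ℝ) (hC : 0 ≤ C) :
    ∃ K : ℝ, 0 ≤ K ∧ ∀ c, 0 ≤ c → c ≤ C → ∀ x,
      chernoffExponent p z c x + z / (2 * p) * |x| ^ p ≤ K := by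
  have hp0 : 0 < p := by linarith
  have hp1 : 0 < p - 1 := by linarith
  refine ⟨z / 2 / p * ((p - 1) * (C / (z / 2)) ^ (p / (p - 1))), by positivity, ?_⟩
  intro c hc hcC x
  have hy := young_conj hp (abs_nonneg x) (c := C / (z / 2)) (by positivity)
  have h1 : c * x ≤ C * |x| :=
    (mul_le_mul_of_nonneg_left (le_abs_self x) hc).trans
      (mul_le_mul_of_nonneg_right hcC (abs_nonneg x))
  have h2 : C * |x| ≤ z / 2 * ((|x| ^ p + (p - 1) * (C / (z / 2)) ^ (p / (p - 1))) / p) := by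
    have := mul_le_mul_of_nonneg_left hy (show 0 ≤ z / 2 by positivity)
    refine le_trans (le_of_eq ?_) this
    field_simp
  have h3 : 0 ≤ z / p * ((p - 1) * c ^ (p / (p - 1))) := by positivity
  have e1 : z / p * (|x| ^ p + (p - 1) * c ^ (p / (p - 1)))
      = 2 * (z / (2 * p) * |x| ^ p) + z / p * ((p - 1) * c ^ (p / (p - 1))) := by
    field_simp
  have e2 : z / 2 * ((|x| ^ p + (p - 1) * (C / (z / 2)) ^ (p / (p - 1))) / p)
      = z / (2 * p) * |x| ^ p + z / 2 / p * ((p - 1) * (C / (z / 2)) ^ (p / (p - 1))) := by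
    field_simp
  unfold chernoffExponent
  linarith

lemma chernoffExponent_le {p z : ℝ} (hp : 1 < p) (hz : 0 < z) (C : ℝ) (hC : 0 ≤ C) :
    ∃ K : ℝ, 0 ≤ K ∧ ∀ c, 0 ≤ c → c ≤ C → ∀ x, chernoffExponent p z c x ≤ K := by
  obtain ⟨K, hK, h⟩ := chernoffExponent_add_le hp hz C hC
  refine ⟨K, hK, fun c h0 h1 x => ?_⟩
  have hp0 : 0 < p := by linarith
  have : 0 ≤ z / (2 * p) * |x| ^ p := by positivity
  linarith [h c h0 h1 x]

lemma continuous_chernoffExponent {p : ℝ} (z c : ℝ) (hp : 1 < p) :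
    Continuous (chernoffExponent p z c) := by
  unfold chernoffExponent
  have : Continuous fun x : ℝ => |x| ^ p :=
    continuous_abs.rpow_const fun _ => Or.inr (by linarith)
  fun_prop

lemma continuous_chernoffExponent_left {p : ℝ} (z x : ℝ) (hp : 1 < p) :
    Continuous fun c => chernoffExponent p z c x := by
  unfold chernoffExponent
  have : Continuous fun c : ℝ => c ^ (p / (p - 1)) :=
    continuous_id.rpow_const fun _ => Or.inr (div_nonneg (by linarith) (by linarith))
  fun_prop

/-- Homogeneity: rescaling `x` by `c^{q-1}` and the exponent by `c^q`, `q = p/(p-1)`, reduces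
`W_c` to `W_1`. -/
lemma chernoffExponent_scale {p z c : ℝ} (hp : 1 < p) (hc : 0 < c) (x : ℝ) :
    c ^ (-(p / (p - 1))) * chernoffExponent p z c x
      = chernoffExponent p z 1 (c ^ (-(1 / (p - 1))) * x) := by
  have hp1 : 0 < p - 1 := by linarith
  unfold chernoffExponent
  rw [Real.one_rpow, abs_mul, Real.mul_rpow (abs_nonneg _) (abs_nonneg _),
    abs_of_pos (Real.rpow_pos_of_pos hc _), ← Real.rpow_mul hc.le]
  have e1 : c ^ (-(1 / (p - 1))) = c ^ (-(p / (p - 1))) * c := by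
    nth_rewrite 3 [← Real.rpow_one c]
    rw [← Real.rpow_add hc]; congr 1; field_simp; ring
  have e2 : -(1 / (p - 1)) * p = -(p / (p - 1)) := by ring
  have e3 : c ^ (-(p / (p - 1))) * c ^ (p / (p - 1)) = 1 := by
    rw [← Real.rpow_add hc]; simp
  rw [e1, e2]
  linear_combination (-(z / p * (p - 1))) * e3

/-- Every point of `B_z` lies in the half-plane with parameter `c = x₂^{(p-1)/p}`, whose boundary
touches the boundary of `B_z` at height `x₂` when `x₂ > 0`. -/
lemma exists_halfplane {p z x₁ x₂ : ℝ} (hp : 1 < p) (h2 : 0 ≤ x₂)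
    (h1 : z * x₂ ^ (1 / p) ≤ x₁) :
    ∃ c : ℝ, 0 ≤ c ∧ 0 ≤ c * x₁ - z / p * (x₂ + (p - 1) * c ^ (p / (p - 1))) := by
  have hp0 : 0 < p := by linarith
  have hp1 : 0 < p - 1 := by linarith
  refine ⟨x₂ ^ ((p - 1) / p), by positivity, ?_⟩
  rw [← Real.rpow_mul h2]
  have e : (p - 1) / p * (p / (p - 1)) = 1 := by field_simp
  rw [e, Real.rpow_one]
  have h3 := mul_le_mul_of_nonneg_left h1 (Real.rpow_nonneg h2 ((p - 1) / p))
  have e2 : x₂ ^ ((p - 1) / p) * x₂ ^ (1 / p) = x₂ := by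
    rw [← Real.rpow_add' h2]
    · rw [← add_div]; simp [hp0.ne']
    · rw [← add_div]; simp [hp0.ne']
  have e3 : x₂ ^ ((p - 1) / p) * (z * x₂ ^ (1 / p)) = z * x₂ := by
    linear_combination z * e2
  have e4 : z / p * (x₂ + (p - 1) * x₂) = z * x₂ := by field_simp; ring
  rw [e4]; linarith

/-- For `c > 0` the part of the half-plane with `x₂ ≥ 0` is contained in `B_z`. -/
lemma mem_of_halfplane {p z c x₁ x₂ : ℝ} (hp : 1 < p) (hz : 0 < z) (hc : 0 < c) (h2 : 0 ≤ x₂)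
    (h : 0 ≤ c * x₁ - z / p * (x₂ + (p - 1) * c ^ (p / (p - 1)))) :
    z * x₂ ^ (1 / p) ≤ x₁ := by
  have hp0 : 0 < p := by linarith
  have hy := young_conj hp (Real.rpow_nonneg h2 (1 / p)) hc.le
  rw [← Real.rpow_mul h2, one_div_mul_cancel hp0.ne', Real.rpow_one] at hy
  have hy2 := mul_le_mul_of_nonneg_left hy hz.le
  have : z * ((x₂ + (p - 1) * c ^ (p / (p - 1))) / p)
    = z / p * (x₂ + (p - 1) * c ^ (p / (p - 1))) := by ring
  refine le_of_mul_le_mul_left ?_ hc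
  linarith

/-! ### Jensen's inequality under a weight and Fatou's lemma at zero -/

section Measure

variable {Ω : Type*} [MeasurableSpace Ω] {P : Measure Ω}

/-- Jensen's inequality for `exp` under a weight `w`, with values in `[0, ∞]` so that no
integrability of `exp g` is needed. -/
lemma jensen_exp_weight {w g : Ω → ℝ} (hgm : Measurable g) (hwm : Measurable w)
    (hw0 : ∀ ω, 0 ≤ w ω)
    (hwi : Integrable w P) (hgi : Integrable (fun ω => g ω * w ω) P) {m a : ℝ}
    (hm : ∫ ω, w ω ∂P = m) (ha : ∫ ω, g ω * w ω ∂P = a * m) :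
    ENNReal.ofReal (m * Real.exp a) ≤ ∫⁻ ω, ENNReal.ofReal (Real.exp (g ω) * w ω) ∂P := by
  by_cases htop : ∫⁻ ω, ENNReal.ofReal (Real.exp (g ω) * w ω) ∂P = ⊤
  · rw [htop]; exact le_top
  have h0 : ∀ ω, 0 ≤ Real.exp (g ω) * w ω := fun ω => mul_nonneg (Real.exp_pos _).le (hw0 ω)
  have hint : Integrable (fun ω => Real.exp (g ω) * w ω) P := by
    refine ⟨by fun_prop, ?_⟩
    rw [hasFiniteIntegral_iff_ofReal (ae_of_all _ h0)]
    exact lt_top_iff_ne_top.2 htop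
  rw [← ofReal_integral_eq_lintegral_ofReal hint (ae_of_all _ h0)]
  apply ENNReal.ofReal_le_ofReal
  -- integrate the tangent-line bound `exp g ≥ exp a * (1 + g - a)` against `w`
  have hlin : Integrable (fun ω => Real.exp a * ((1 - a) * w ω + g ω * w ω)) P :=
    ((hwi.const_mul _).add hgi).const_mul _
  have h1 : ∫ ω, Real.exp a * ((1 - a) * w ω + g ω * w ω) ∂P = m * Real.exp a := by
    rw [integral_const_mul, integral_add (hwi.const_mul _) hgi, integral_const_mul, hm, ha]
    ring
  rw [← h1]
  refine integral_mono hlin hint fun ω => ?_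
  have h2 : Real.exp a * (g ω - a + 1) ≤ Real.exp (g ω) := by
    have := mul_le_mul_of_nonneg_left (Real.add_one_le_exp (g ω - a)) (Real.exp_pos a).le
    rwa [← Real.exp_add, add_sub_cancel] at this
  have := mul_le_mul_of_nonneg_right h2 (hw0 ω)
  simp only
  linarith

/-- If `W` is bounded above and `E exp(tW) ≥ 1` for all small `t > 0`, then `W` is integrable with
nonnegative mean: Fatou's lemma applied to the difference quotients `(exp(tW) - 1)/t → W`. -/
lemma integrable_and_mean_nonneg [IsProbabilityMeasure P] {W : Ω → ℝ} (hW : Measurable W) {K : ℝ}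
    (hK : 0 ≤ K) (hWK : ∀ ω, W ω ≤ K)
    (h : ∀ t, 0 < t → t ≤ 1 → 1 ≤ ∫ ω, Real.exp (t * W ω) ∂P) :
    Integrable W P ∧ 0 ≤ ∫ ω, W ω ∂P := by
  set B : ℝ := K * Real.exp K with hB
  have hB0 : 0 ≤ B := by positivity
  have hKB : K ≤ B := le_mul_of_one_le_right hK (Real.one_le_exp hK)
  set t : ℕ → ℝ := fun n => 1 / ((n : ℝ) + 1) with ht
  have ht0 : ∀ n, 0 < t n := fun n => by simp only [ht]; positivity
  have ht1 : ∀ n, t n ≤ 1 := fun n => by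
    simp only [ht]; rw [div_le_one (by positivity)]
    have : (0 : ℝ) ≤ n := n.cast_nonneg
    linarith
  have htl : Tendsto t atTop (nhds 0) := tendsto_one_div_add_atTop_nhds_zero_nat
  set H : ℕ → Ω → ℝ := fun n ω => B - (Real.exp (t n * W ω) - 1) / t n with hH
  have hHm : ∀ n, Measurable (H n) := fun n => by simp only [hH]; fun_prop
  have hexp : ∀ n, Integrable (fun ω => Real.exp (t n * W ω)) P := fun n => by
    refine Integrable.of_bound (C := Real.exp (t n * K)) (by fun_prop) (ae_of_all _ fun ω => ?_)
    rw [Real.norm_eq_abs, Real.abs_exp]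
    exact Real.exp_le_exp.2 (mul_le_mul_of_nonneg_left (hWK ω) (ht0 n).le)
  have hH0 : ∀ n ω, 0 ≤ H n ω := fun n ω => by
    have h1 : Real.exp (t n * W ω) ≤ Real.exp (t n * K) :=
      Real.exp_le_exp.2 (mul_le_mul_of_nonneg_left (hWK ω) (ht0 n).le)
    have h2 : Real.exp (t n * K) * (1 - t n * K) ≤ 1 := by
      have := mul_le_mul_of_nonneg_left (Real.add_one_le_exp (-(t n * K)))
        (Real.exp_pos (t n * K)).le
      rw [← Real.exp_add, add_neg_cancel, Real.exp_zero] at this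
      linarith
    have h3 : Real.exp (t n * K) ≤ Real.exp K :=
      Real.exp_le_exp.2 (mul_le_of_le_one_left hK (ht1 n))
    have h4 : t n * K * Real.exp (t n * K) ≤ t n * K * Real.exp K :=
      mul_le_mul_of_nonneg_left h3 (mul_nonneg (ht0 n).le hK)
    have : (Real.exp (t n * W ω) - 1) / t n ≤ B := by
      rw [div_le_iff₀ (ht0 n)]
      calc _ ≤ t n * K * Real.exp K := by linarith
        _ = _ := by rw [hB]; ring
    simp only [hH]; linarith
  have hquot : ∀ n, Integrable (fun ω => (Real.exp (t n * W ω) - 1) / t n) P := fun n =>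
    ((hexp n).sub (integrable_const 1)).div_const _
  have hHint : ∀ n, Integrable (H n) P := fun n => (integrable_const B).sub (hquot n)
  have hHle : ∀ n, ∫⁻ ω, ENNReal.ofReal (H n ω) ∂P ≤ ENNReal.ofReal B := fun n => by
    rw [← ofReal_integral_eq_lintegral_ofReal (hHint n) (ae_of_all _ (hH0 n))]
    apply ENNReal.ofReal_le_ofReal
    simp only [hH]
    rw [integral_sub (integrable_const B) (hquot n),
      integral_div, integral_sub (hexp n) (integrable_const 1)]
    simp only [integral_const, probReal_univ, smul_eq_mul, one_mul]
    have := div_nonneg (sub_nonneg.2 (h (t n) (ht0 n) (ht1 n))) (ht0 n).le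
    linarith
  have hlim : ∀ ω, Tendsto (fun n => H n ω) atTop (nhds (B - W ω)) := fun ω => by
    have hd : HasDerivAt (fun s : ℝ => Real.exp (s * W ω)) (W ω) 0 := by
      have := ((hasDerivAt_id (0 : ℝ)).mul_const (W ω)).exp
      simpa using this
    have h1 := hd.tendsto_slope_zero
    have h2 : Tendsto t atTop (nhdsWithin 0 {0}ᶜ) :=
      tendsto_nhdsWithin_iff.2 ⟨htl, Eventually.of_forall fun n => (ht0 n).ne'⟩
    have h3 := h1.comp h2
    refine (h3.const_sub B).congr fun n => ?_
    simp only [hH, Function.comp, zero_add, zero_mul, Real.exp_zero, smul_eq_mul]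
    rw [div_eq_inv_mul]
  have hfat : ∫⁻ ω, ENNReal.ofReal (B - W ω) ∂P ≤ ENNReal.ofReal B := by
    have h1 := lintegral_liminf_le (μ := P) (u := atTop)
      (f := fun n ω => ENNReal.ofReal (H n ω)) (fun n => (hHm n).ennreal_ofReal)
    have h2 : ∀ ω, liminf (fun n => ENNReal.ofReal (H n ω)) atTop = ENNReal.ofReal (B - W ω) :=
      fun ω => (ENNReal.tendsto_ofReal (hlim ω)).liminf_eq
    simp only [h2] at h1
    refine h1.trans ?_
    refine (liminf_le_liminf (Eventually.of_forall hHle)).trans ?_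
    simp
  have hBW0 : ∀ ω, 0 ≤ B - W ω := fun ω => by linarith [hWK ω]
  have hBW : Integrable (fun ω => B - W ω) P := by
    refine ⟨by fun_prop, ?_⟩
    rw [hasFiniteIntegral_iff_ofReal (ae_of_all _ hBW0)]
    exact hfat.trans_lt ENNReal.ofReal_lt_top
  have hWi : Integrable W P := by
    refine ((integrable_const B).sub hBW).congr (ae_of_all _ fun ω => ?_)
    simp
  refine ⟨hWi, ?_⟩
  rw [← ofReal_integral_eq_lintegral_ofReal hBW (ae_of_all _ hBW0),
    ENNReal.ofReal_le_ofReal_iff hB0, integral_sub (integrable_const B) hWi] at hfat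
  simp at hfat
  exact hfat

/-! ### Optimal points of the half-planes -/

lemma measurable_chernoffExponent {X : Ω → ℝ} (hX : Measurable X) {p : ℝ} (z c : ℝ)
    (hp : 1 < p) : Measurable fun ω => chernoffExponent p z c (X ω) :=
  (continuous_chernoffExponent z c hp).measurable.comp hX

/-- If `E[(X, |X|^p) w] = E[w] α` for a weight `0 ≤ w ≤ exp V` with `E[V w] = 0`, then
`Λ(α) ≤ -ln E[w]`: Jensen under `w` bounds every `A(λ)` below by `ln E[w] + ⟨λ, α⟩`. -/
lemma rate_le_of_weight {X : Ω → ℝ} (hX : Measurable X) {p : ℝ} {w V : Ω → ℝ}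
    (hwm : Measurable w) (hVm : Measurable V) (hw0 : ∀ ω, 0 ≤ w ω)
    (hwV : ∀ ω, w ω ≤ Real.exp (V ω)) (hwi : Integrable w P)
    (hXw : Integrable (fun ω => X ω * w ω) P) (hYw : Integrable (fun ω => |X ω| ^ p * w ω) P)
    (hVw : Integrable (fun ω => V ω * w ω) P) (hV0 : ∫ ω, V ω * w ω ∂P = 0)
    (hm : 0 < ∫ ω, w ω ∂P) {α : ℝ × ℝ}
    (h1 : ∫ ω, X ω * w ω ∂P = α.1 * ∫ ω, w ω ∂P)
    (h2 : ∫ ω, |X ω| ^ p * w ω ∂P = α.2 * ∫ ω, w ω ∂P) :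
    selfNormRate P X p α ≤ ((-Real.log (∫ ω, w ω ∂P) : ℝ) : EReal) := by
  refine iSup_le fun l => ?_
  set m := ∫ ω, w ω ∂P with hmdef
  have hYm : Measurable fun ω => |X ω| ^ p := by fun_prop
  have e : (fun ω => (l.1 * X ω + l.2 * |X ω| ^ p - V ω) * w ω)
      = fun ω => (l.1 * (X ω * w ω) + l.2 * (|X ω| ^ p * w ω)) - V ω * w ω := by
    ext ω; ring
  have hXY : Integrable (fun ω => l.1 * (X ω * w ω) + l.2 * (|X ω| ^ p * w ω)) P :=
    (hXw.const_mul _).add (hYw.const_mul _)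
  have hJ := jensen_exp_weight (P := P) (g := fun ω => l.1 * X ω + l.2 * |X ω| ^ p - V ω)
    (w := w) (m := m) (a := α.1 * l.1 + α.2 * l.2) (by fun_prop) hwm hw0 hwi
    (by rw [e]; exact hXY.sub hVw) rfl
    (by rw [e, integral_sub hXY hVw, integral_add (hXw.const_mul _) (hYw.const_mul _),
          integral_const_mul, integral_const_mul, h1, h2, hV0]; ring)
  have hA : ((Real.log m + (α.1 * l.1 + α.2 * l.2) : ℝ) : EReal) ≤ selfNormCumulant P X p l := by
    have hpos : 0 < m * Real.exp (α.1 * l.1 + α.2 * l.2) := by positivity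
    have elog : Real.log m + (α.1 * l.1 + α.2 * l.2)
        = Real.log (m * Real.exp (α.1 * l.1 + α.2 * l.2)) := by
      rw [Real.log_mul hm.ne' (Real.exp_ne_zero _), Real.log_exp]
    rw [elog, ← ENNReal.log_ofReal_of_pos hpos]
    refine ENNReal.log_le_log (hJ.trans (lintegral_mono fun ω => ENNReal.ofReal_le_ofReal ?_))
    calc Real.exp (l.1 * X ω + l.2 * |X ω| ^ p - V ω) * w ω
        ≤ Real.exp (l.1 * X ω + l.2 * |X ω| ^ p - V ω) * Real.exp (V ω) :=
          mul_le_mul_of_nonneg_left (hwV ω) (Real.exp_pos _).le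
      _ = _ := by rw [← Real.exp_add]; congr 1; ring
  refine (EReal.sub_le_sub le_rfl hA).trans ?_
  rw [← EReal.coe_sub]
  exact le_of_eq (by congr 1; ring)

/-- Integrability of `W_c` against a weight gives that of `X` and `|X|^p`, since `W_c` is at most a
constant minus a multiple of `|X|^p`. -/
lemma integrable_of_chernoffExponent {X : Ω → ℝ} (hX : Measurable X) {p z c : ℝ} (hp : 1 < p)
    (hz : 0 < z) (hc : 0 ≤ c) {w : Ω → ℝ} (hwm : Measurable w) (hw0 : ∀ ω, 0 ≤ w ω)
    (hwi : Integrable w P)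
    (hWw : Integrable (fun ω => chernoffExponent p z c (X ω) * w ω) P) :
    Integrable (fun ω => X ω * w ω) P ∧ Integrable (fun ω => |X ω| ^ p * w ω) P := by
  have hp0 : 0 < p := by linarith
  obtain ⟨K, hK, h⟩ := chernoffExponent_add_le hp hz c hc
  have hYm : Measurable fun ω => |X ω| ^ p := by fun_prop
  have hY : Integrable (fun ω => |X ω| ^ p * w ω) P := by
    refine Integrable.mono' (((hwi.const_mul K).sub hWw).const_mul (2 * p / z))
      (by fun_prop) (ae_of_all _ fun ω => ?_)
    have h0 : 0 ≤ |X ω| ^ p := by positivity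
    rw [Real.norm_eq_abs, abs_of_nonneg (mul_nonneg h0 (hw0 ω))]
    have h1 : z / (2 * p) * |X ω| ^ p ≤ K - chernoffExponent p z c (X ω) := by
      linarith [h c hc le_rfl (X ω)]
    have h2 := mul_le_mul_of_nonneg_right h1 (hw0 ω)
    have h3 := mul_le_mul_of_nonneg_left h2 (show 0 ≤ 2 * p / z by positivity)
    have e : 2 * p / z * (z / (2 * p) * |X ω| ^ p * w ω) = |X ω| ^ p * w ω := by field_simp
    rw [e] at h3
    simpa [sub_mul] using h3
  refine ⟨?_, hY⟩
  refine Integrable.mono' (hwi.add hY) (by fun_prop) (ae_of_all _ fun ω => ?_)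
  rw [Real.norm_eq_abs, abs_mul, abs_of_nonneg (hw0 ω)]
  have h1 : |X ω| ≤ 1 + |X ω| ^ p := by
    rcases le_total |X ω| 1 with h | h
    · have : 0 ≤ |X ω| ^ p := by positivity
      linarith
    · have := Real.rpow_le_rpow_of_exponent_le h hp.le
      rw [Real.rpow_one] at this; linarith
  have := mul_le_mul_of_nonneg_right h1 (hw0 ω)
  simpa [add_mul] using this

/-- The barycentre of `(X, |X|^p)` under a weight `0 ≤ w ≤ exp(t W_c)` with `E[W_c w] = 0` lies in
`B_z` and has rate at most `-ln E[w]`. -/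
lemma exists_rate_le {X : Ω → ℝ} (hX : Measurable X) {p z c : ℝ} (hp : 1 < p)
    (hz : 0 < z) (hc : 0 ≤ c) {w : Ω → ℝ} (t : ℝ) (hwm : Measurable w) (hw0 : ∀ ω, 0 ≤ w ω)
    (hwi : Integrable w P) (hwV : ∀ ω, w ω ≤ Real.exp (t * chernoffExponent p z c (X ω)))
    (hWw : Integrable (fun ω => chernoffExponent p z c (X ω) * w ω) P)
    (hW0 : ∫ ω, chernoffExponent p z c (X ω) * w ω ∂P = 0)
    (hm : 0 < ∫ ω, w ω ∂P) :
    ∃ α ∈ {x : ℝ × ℝ | 0 ≤ x.2 ∧ z * x.2 ^ (1 / p) ≤ x.1},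
      selfNormRate P X p α ≤ ((-Real.log (∫ ω, w ω ∂P) : ℝ) : EReal) := by
  have hp0 : 0 < p := by linarith
  obtain ⟨hXw, hYw⟩ := integrable_of_chernoffExponent hX hp hz hc hwm hw0 hwi hWw
  have hWm := measurable_chernoffExponent hX z c hp
  set m := ∫ ω, w ω ∂P with hmdef
  set a := (∫ ω, X ω * w ω ∂P) / m with ha
  set b := (∫ ω, |X ω| ^ p * w ω ∂P) / m with hb
  have ea : ∫ ω, X ω * w ω ∂P = a * m := by rw [ha]; field_simp
  have eb : ∫ ω, |X ω| ^ p * w ω ∂P = b * m := by rw [hb]; field_simp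
  have hY0 : ∀ ω, 0 ≤ |X ω| ^ p * w ω := fun ω => mul_nonneg (by positivity) (hw0 ω)
  have hb0 : 0 ≤ b := div_nonneg (integral_nonneg hY0) hm.le
  have hW : c * a - z / p * (b + (p - 1) * c ^ (p / (p - 1))) = 0 := by
    have e : (fun ω => chernoffExponent p z c (X ω) * w ω) = fun ω =>
        c * (X ω * w ω) - (z / p * (|X ω| ^ p * w ω)
          + z / p * ((p - 1) * c ^ (p / (p - 1))) * w ω) := by
      ext ω; unfold chernoffExponent; ring
    have hYc : Integrable (fun ω => z / p * (|X ω| ^ p * w ω)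
        + z / p * ((p - 1) * c ^ (p / (p - 1))) * w ω) P :=
      (hYw.const_mul _).add (hwi.const_mul _)
    rw [e, integral_sub (hXw.const_mul _) hYc,
      integral_add (hYw.const_mul _) (hwi.const_mul _), integral_const_mul, integral_const_mul,
      integral_const_mul, ea, eb] at hW0
    have : m * (c * a - z / p * (b + (p - 1) * c ^ (p / (p - 1)))) = 0 := by
      rw [← hW0]; ring
    exact (mul_eq_zero.1 this).resolve_left hm.ne'
  refine ⟨(a, b), ⟨hb0, ?_⟩, ?_⟩
  · rcases hc.eq_or_lt with rfl | hcpos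
    · -- for `c = 0` the weight lives on `{X = 0}`, hence the barycentre is the origin
      have hq : p / (p - 1) ≠ 0 := (div_pos hp0 (by linarith)).ne'
      have hb' : b = 0 := by
        rw [Real.zero_rpow hq] at hW
        have : z / p * b = 0 := by linarith
        exact (mul_eq_zero.1 this).resolve_left (by positivity)
      have h1 : (fun ω => |X ω| ^ p * w ω) =ᵐ[P] 0 := by
        rw [← integral_eq_zero_iff_of_nonneg hY0 hYw, eb, hb', zero_mul]
      have h2 : ∫ ω, X ω * w ω ∂P = 0 := by
        refine integral_eq_zero_of_ae ?_
        filter_upwards [h1] with ω hω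
        rcases mul_eq_zero.1 hω with h | h
        · have : X ω = 0 :=
            abs_eq_zero.1 ((Real.rpow_eq_zero (abs_nonneg _) hp0.ne').1 h)
          simp [this]
        · simp [h]
      have ha' : a = 0 := by rw [ha, h2, zero_div]
      simp only [ha', hb']
      rw [Real.zero_rpow (by positivity), mul_zero]
    · exact mem_of_halfplane hp hz hcpos hb0 hW.ge
  · refine rate_le_of_weight hX hwm (V := fun ω => t * chernoffExponent p z c (X ω))
      (by fun_prop) hw0 hwV hwi hXw hYw ?_ ?_ hm ea eb
    · simpa [mul_assoc] using hWw.const_mul t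
    · simp only [mul_assoc]; rw [integral_const_mul, hW0, mul_zero]

variable [IsProbabilityMeasure P]

lemma integrable_exp_chernoffExponent {X : Ω → ℝ} (hX : Measurable X) {p z c t : ℝ} (hp : 1 < p)
    (hz : 0 < z) (hc : 0 ≤ c) (ht : 0 ≤ t) :
    Integrable (fun ω => Real.exp (t * chernoffExponent p z c (X ω))) P := by
  obtain ⟨K, hK, h⟩ := chernoffExponent_le hp hz c hc
  have hWm := measurable_chernoffExponent hX z c hp
  refine Integrable.of_bound (C := Real.exp (t * K))
    (hWm.const_mul t).exp.aestronglyMeasurable (ae_of_all _ fun ω => ?_)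
  rw [Real.norm_eq_abs, Real.abs_exp]
  exact Real.exp_le_exp.2 (mul_le_mul_of_nonneg_left (h c hc le_rfl _) ht)

lemma lintegral_exp_chernoffExponent {X : Ω → ℝ} (hX : Measurable X) {p z c t : ℝ} (hp : 1 < p)
    (hz : 0 < z) (hc : 0 ≤ c) (ht : 0 ≤ t) :
    ∫⁻ ω, ENNReal.ofReal (Real.exp (t * chernoffExponent p z c (X ω))) ∂P
      = ENNReal.ofReal (∫ ω, Real.exp (t * chernoffExponent p z c (X ω)) ∂P) :=
  (ofReal_integral_eq_lintegral_ofReal (integrable_exp_chernoffExponent hX hp hz hc ht)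
    (ae_of_all _ fun _ => (Real.exp_pos _).le)).symm

/-- The condition `z > z*` makes the drift of `W_c` negative (possibly `-∞`), so that its moment
generating function takes a value below `1`. -/
lemma exists_mgf_lt_one {X : Ω → ℝ} (hX : Measurable X) {p z c : ℝ} (hp : 1 < p)
    (hz : 0 < z) (hc : 0 < c) (hpos : 0 < P {ω | 0 < X ω})
    (hz1 : Integrable (fun ω => |X ω| ^ p) P →
      (∫ ω, X ω ∂P) * (∫ ω, |X ω| ^ p ∂P) ^ (-(1 / p)) < z) :
    ∃ t, 0 < t ∧ ∫ ω, Real.exp (t * chernoffExponent p z c (X ω)) ∂P < 1 := by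
  by_contra! hcon
  have hp0 : 0 < p := by linarith
  obtain ⟨K, hK, h⟩ := chernoffExponent_le hp hz c hc.le
  obtain ⟨hWi, hW0⟩ := integrable_and_mean_nonneg (P := P)
    (measurable_chernoffExponent hX z c hp) hK
    (fun ω => h c hc.le le_rfl (X ω)) (fun t ht _ => hcon t ht)
  obtain ⟨hXi, hYi⟩ := integrable_of_chernoffExponent (P := P) hX hp hz hc.le
    (w := fun _ => 1) measurable_const (fun _ => zero_le_one) (integrable_const 1)
    (by simpa using hWi)
  simp only [mul_one] at hXi hYi
  have hY0 : ∀ ω, 0 ≤ |X ω| ^ p := fun ω => by positivity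
  have hEY : 0 < ∫ ω, |X ω| ^ p ∂P := by
    rw [integral_pos_iff_support_of_nonneg hY0 hYi]
    refine hpos.trans_le (measure_mono fun ω hω => ?_)
    have : 0 < X ω := hω
    rw [Function.mem_support]
    have : 0 < |X ω| := abs_pos.2 this.ne'
    positivity
  have e : ∫ ω, chernoffExponent p z c (X ω) ∂P = c * (∫ ω, X ω ∂P)
      - z / p * ((∫ ω, |X ω| ^ p ∂P) + (p - 1) * c ^ (p / (p - 1))) := by
    unfold chernoffExponent
    have hYc : Integrable (fun ω => |X ω| ^ p + (p - 1) * c ^ (p / (p - 1))) P :=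
      hYi.add (integrable_const _)
    rw [integral_sub (hXi.const_mul _) (hYc.const_mul _),
      integral_const_mul, integral_const_mul, integral_add hYi (integrable_const _)]
    simp
  rw [e] at hW0
  have h1 := mem_of_halfplane hp hz hc hEY.le hW0
  have h2 := hz1 hYi
  rw [Real.rpow_neg hEY.le, ← div_eq_mul_inv, div_lt_iff₀ (by positivity)] at h2
  linarith

/-- When `W_c > 0` has positive probability, the moment generating function of `W_c` has a critical
point `t > 0`; tilting by `exp(t W_c)` gives an optimal point of `B_z`. -/
lemma hard_of_pos {X : Ω → ℝ} (hX : Measurable X) {p z c : ℝ} (hp : 1 < p)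
    (hz : 0 < z) (hc : 0 < c) (hpos : 0 < P {ω | 0 < X ω})
    (hz1 : Integrable (fun ω => |X ω| ^ p) P →
      (∫ ω, X ω ∂P) * (∫ ω, |X ω| ^ p ∂P) ^ (-(1 / p)) < z)
    (hW : P {ω | 0 < chernoffExponent p z c (X ω)} ≠ 0) :
    ∃ t, 0 ≤ t ∧ ∃ α ∈ {x : ℝ × ℝ | 0 ≤ x.2 ∧ z * x.2 ^ (1 / p) ≤ x.1},
      selfNormRate P X p α
        ≤ ((-Real.log (∫ ω, Real.exp (t * chernoffExponent p z c (X ω)) ∂P) : ℝ) : EReal) := by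
  obtain ⟨t₀, ht₀, hlt⟩ := exists_mgf_lt_one (P := P) hX hp hz hc hpos hz1
  obtain ⟨K, hK, h⟩ := chernoffExponent_le hp hz c hc.le
  set W : Ω → ℝ := fun ω => chernoffExponent p z c (X ω) with hWdef
  have hWm : Measurable W := measurable_chernoffExponent hX z c hp
  have hexp : ∀ t, 0 ≤ t → Integrable (fun ω => Real.exp (t * W ω)) P := fun t ht =>
    integrable_exp_chernoffExponent hX hp hz hc.le ht
  have hint : ∀ t, 0 < t → t ∈ interior (integrableExpSet W P) := fun t ht => by
    have : Set.Ioi (0 : ℝ) ⊆ interior (integrableExpSet W P) :=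
      interior_maximal (fun s hs => hexp s (le_of_lt hs)) isOpen_Ioi
    exact this ht
  obtain ⟨δ, hδ, hPδ⟩ : ∃ δ : ℝ, 0 < δ ∧ 0 < P.real {ω | δ ≤ W ω} := by
    by_contra! hcon
    refine hW (measure_mono_null (t := ⋃ n : ℕ, {ω | 1 / ((n : ℝ) + 1) ≤ W ω}) ?_ ?_)
    · intro ω hω
      obtain ⟨n, hn⟩ := exists_nat_one_div_lt (show 0 < W ω from hω)
      exact Set.mem_iUnion.2 ⟨n, hn.le⟩
    · refine measure_iUnion_null fun n => ?_
      have := hcon (1 / ((n : ℝ) + 1)) (by positivity)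
      exact (measureReal_eq_zero_iff).1 (le_antisymm this measureReal_nonneg)
  obtain ⟨T, hT, hT1⟩ : ∃ T, t₀ < T ∧ 1 ≤ mgf W P T := by
    have hlim : Tendsto (fun t : ℝ => Real.exp (t * δ) * P.real {ω | δ ≤ W ω}) atTop atTop :=
      (Real.tendsto_exp_atTop.comp (tendsto_id.atTop_mul_const hδ)).atTop_mul_const hPδ
    obtain ⟨T, h1, h2⟩ := ((hlim.eventually_ge_atTop 1).and (eventually_gt_atTop t₀)).exists
    refine ⟨T, h2, h1.trans ?_⟩
    have := measure_ge_le_exp_mul_mgf (μ := P) (X := W) δ (ht₀.trans h2).le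
      (hexp T (ht₀.trans h2).le)
    have h3 := mul_le_mul_of_nonneg_left this (Real.exp_pos (T * δ)).le
    rw [← mul_assoc, ← Real.exp_add] at h3
    simpa using h3
  have hcont : ContinuousOn (mgf W P) (Set.Icc 0 T) := by
    unfold mgf
    refine continuousOn_of_dominated (bound := fun _ => Real.exp (T * K))
      (fun t _ => by fun_prop) (fun t ht => ae_of_all _ fun ω => ?_) (integrable_const _)
      (ae_of_all _ fun ω => by fun_prop)
    rw [Real.norm_eq_abs, Real.abs_exp]
    exact Real.exp_le_exp.2 ((mul_le_mul_of_nonneg_left (h c hc.le le_rfl _) ht.1).trans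
      (mul_le_mul_of_nonneg_right ht.2 hK))
  obtain ⟨s, hs, hmin⟩ := isCompact_Icc.exists_isMinOn ⟨t₀, ht₀.le, hT.le⟩ hcont
  have hs1 : mgf W P s < 1 := lt_of_le_of_lt (hmin ⟨ht₀.le, hT.le⟩) hlt
  have hs0 : 0 < s := by
    rcases hs.1.eq_or_lt with h0 | h0
    · rw [← h0, mgf_zero] at hs1; exact absurd hs1 (lt_irrefl _)
    · exact h0
  have hsT : s < T := by
    rcases hs.2.eq_or_lt with h0 | h0
    · rw [h0] at hs1; linarith
    · exact h0
  have hd := hasDerivAt_mgf (hint s hs0)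
  have hd0 := (hmin.isLocalMin (Icc_mem_nhds hs0 hsT)).hasDerivAt_eq_zero hd
  refine ⟨s, hs0.le, exists_rate_le hX hp hz hc.le s (hWm.const_mul s).exp
    (fun ω => (Real.exp_pos _).le) (hexp s hs0.le) (fun ω => le_rfl) ?_ hd0 ?_⟩
  · simpa using integrable_pow_mul_exp_of_mem_interior_integrableExpSet (hint s hs0) 1
  · exact mgf_pos (hexp s hs0.le)

/-- When `W_c ≤ 0` almost surely, the Chernoff infimum is at most `ln P(W_c = 0)`, reached as
`t → ∞`, and, unless this event is null, conditioning on `{W_c = 0}` gives an optimal point of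
`B_z`. -/
lemma hard_of_null {X : Ω → ℝ} (hX : Measurable X) {p z c : ℝ} (hp : 1 < p)
    (hz : 0 < z) (hc : 0 ≤ c)
    (hW : P {ω | 0 < chernoffExponent p z c (X ω)} = 0) :
    (⨅ t : {t : ℝ // 0 ≤ t}, ENNReal.log (∫⁻ ω, ENNReal.ofReal
        (Real.exp ((t : ℝ) * chernoffExponent p z c (X ω))) ∂P))
      ≤ -(⨅ α ∈ {x : ℝ × ℝ | 0 ≤ x.2 ∧ z * x.2 ^ (1 / p) ≤ x.1}, selfNormRate P X p α) := by
  set W : Ω → ℝ := fun ω => chernoffExponent p z c (X ω) with hWdef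
  have hWm : Measurable W := measurable_chernoffExponent hX z c hp
  set F : Set Ω := {ω | W ω = 0} with hF
  have hFm : MeasurableSet F := hWm (measurableSet_singleton 0)
  set w : Ω → ℝ := F.indicator 1 with hw
  have hwm : Measurable w := measurable_one.indicator hFm
  have hw0 : ∀ ω, 0 ≤ w ω := fun ω => Set.indicator_nonneg (fun _ _ => zero_le_one) ω
  have hwi : Integrable w P := (integrable_const (1 : ℝ)).indicator hFm
  have hint : ∫ ω, w ω ∂P = P.real F := integral_indicator_one hFm
  have hneg : ∀ᵐ ω ∂P, W ω ≤ 0 := by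
    rw [ae_iff]; simpa only [not_le] using hW
  have hlim : Tendsto (fun n : ℕ => ∫ ω, Real.exp ((n : ℝ) * W ω) ∂P) atTop
      (nhds (∫ ω, w ω ∂P)) := by
    refine tendsto_integral_filter_of_dominated_convergence (fun _ => 1)
      (Eventually.of_forall fun n => by fun_prop)
      (Eventually.of_forall fun n => ?_) (integrable_const _) ?_
    · filter_upwards [hneg] with ω hω
      rw [Real.norm_eq_abs, Real.abs_exp]
      exact Real.exp_le_one_iff.2 (mul_nonpos_of_nonneg_of_nonpos n.cast_nonneg hω)
    · filter_upwards [hneg] with ω hω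
      rcases hω.eq_or_lt with h0 | h0
      · have : w ω = 1 := Set.indicator_of_mem (s := F) h0 1
        simp [this, h0]
      · have : w ω = 0 := Set.indicator_of_notMem (s := F) (fun h => h0.ne h) 1
        rw [this]
        exact Real.tendsto_exp_atBot.comp
          (tendsto_natCast_atTop_atTop.atTop_mul_const_of_neg h0)
  have hle : (⨅ t : {t : ℝ // 0 ≤ t}, ENNReal.log (∫⁻ ω, ENNReal.ofReal
      (Real.exp ((t : ℝ) * W ω)) ∂P)) ≤ ENNReal.log (ENNReal.ofReal (∫ ω, w ω ∂P)) := by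
    refine ge_of_tendsto' ((ENNReal.continuous_log.tendsto _).comp
      (ENNReal.tendsto_ofReal hlim)) fun n => ?_
    refine (iInf_le _ (⟨(n : ℝ), n.cast_nonneg⟩ : {t : ℝ // 0 ≤ t})).trans (le_of_eq ?_)
    simp only [Function.comp]
    rw [← lintegral_exp_chernoffExponent hX hp hz hc n.cast_nonneg]
  refine hle.trans ?_
  rcases (integral_nonneg hw0 : 0 ≤ ∫ ω, w ω ∂P).eq_or_lt with h0 | h0
  · rw [← h0]; simp
  have hWw : (fun ω => W ω * w ω) = fun _ => 0 := by
    ext ω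
    by_cases hω : ω ∈ F
    · rw [show W ω = 0 from hω, zero_mul]
    · rw [show w ω = 0 from Set.indicator_of_notMem hω 1, mul_zero]
  obtain ⟨α, hα, hr⟩ := exists_rate_le (P := P) hX hp hz hc (w := w) 0 hwm hw0 hwi
    (fun ω => by
      rw [zero_mul, Real.exp_zero]
      exact Set.indicator_le_self' (fun _ _ => zero_le_one) ω)
    (show Integrable (fun ω => W ω * w ω) P by rw [hWw]; exact integrable_const 0)
    (show ∫ ω, W ω * w ω ∂P = 0 by rw [hWw]; simp) h0
  rw [ENNReal.log_ofReal_of_pos h0, EReal.le_neg]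
  refine (iInf₂_le α hα).trans (hr.trans ?_)
  rw [EReal.coe_neg]

/-! ### Negativity, finiteness and the Chernoff bound -/

/-- As `c → ∞` the moment generating function of `W_c` at `t = c^{-p/(p-1)}` tends to
`exp(-z(p-1)/p) < 1`. -/
lemma tendsto_mgf_atTop {X : Ω → ℝ} (hX : Measurable X) {p z : ℝ} (hp : 1 < p) (hz : 0 < z) :
    Tendsto (fun c : ℝ => ∫ ω, Real.exp (c ^ (-(p / (p - 1))) * chernoffExponent p z c (X ω)) ∂P)
      atTop (nhds (Real.exp (-(z / p * (p - 1))))) := by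
  have hp1 : 0 < p - 1 := by linarith
  obtain ⟨K, hK, h⟩ := chernoffExponent_le hp hz 1 zero_le_one
  have hlim : Tendsto (fun c : ℝ => ∫ ω, Real.exp
      (chernoffExponent p z 1 (c ^ (-(1 / (p - 1))) * X ω)) ∂P) atTop
      (nhds (∫ _, Real.exp (chernoffExponent p z 1 0) ∂P)) := by
    refine tendsto_integral_filter_of_dominated_convergence (fun _ => Real.exp K)
      (Eventually.of_forall fun c => ?_)
      (Eventually.of_forall fun c => ae_of_all _ fun ω => ?_) (integrable_const _)
      (ae_of_all _ fun ω => ?_)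
    · exact ((continuous_chernoffExponent z 1 hp).measurable.comp
        (hX.const_mul _)).exp.aestronglyMeasurable
    · rw [Real.norm_eq_abs, Real.abs_exp]
      exact Real.exp_le_exp.2 (h 1 zero_le_one le_rfl _)
    · have h1 : Tendsto (fun c : ℝ => c ^ (-(1 / (p - 1))) * X ω) atTop (nhds 0) := by
        have := (tendsto_rpow_neg_atTop (show 0 < 1 / (p - 1) by positivity)).mul_const (X ω)
        simpa using this
      exact (Real.continuous_exp.tendsto _).comp
        (((continuous_chernoffExponent z 1 hp).tendsto 0).comp h1)
  have e0 : chernoffExponent p z 1 0 = -(z / p * (p - 1)) := by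
    unfold chernoffExponent
    rw [abs_zero, Real.zero_rpow (by linarith), Real.one_rpow]; ring
  rw [e0] at hlim
  simp only [integral_const, probReal_univ, smul_eq_mul, one_mul] at hlim
  refine hlim.congr' ?_
  filter_upwards [eventually_gt_atTop 0] with c hc
  simp only [chernoffExponent_scale hp hc]

/-- The bound `inf_t E exp(t W_c) < 1` is uniform in `c ≥ 0`: locally by continuity in `c`,
on bounded ranges by compactness, and near infinity by `tendsto_mgf_atTop`. -/
lemma exists_uniform_mgf_bound {X : Ω → ℝ} (hX : Measurable X) {p z : ℝ} (hp : 1 < p)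
    (hz : 0 < z) (hpos : 0 < P {ω | 0 < X ω})
    (hz1 : Integrable (fun ω => |X ω| ^ p) P →
      (∫ ω, X ω ∂P) * (∫ ω, |X ω| ^ p ∂P) ^ (-(1 / p)) < z) :
    ∃ r : ℝ, 0 < r ∧ r < 1 ∧ ∀ c, 0 ≤ c → ∃ t, 0 ≤ t ∧
      ∫ ω, Real.exp (t * chernoffExponent p z c (X ω)) ∂P ≤ r := by
  have hp0 : 0 < p := by linarith
  have hp1 : 0 < p - 1 := by linarith
  have hpt : ∀ c, 0 ≤ c → ∃ t, 0 ≤ t ∧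
      ∫ ω, Real.exp (t * chernoffExponent p z c (X ω)) ∂P < 1 := by
    intro c hc
    rcases hc.eq_or_lt with rfl | hc'
    · refine ⟨1, zero_le_one, ?_⟩
      have e0 : ∀ x, chernoffExponent p z 0 x = -(z / p * |x| ^ p) := fun x => by
        unfold chernoffExponent
        rw [Real.zero_rpow (div_pos hp0 hp1).ne']; ring
      have hi := integrable_exp_chernoffExponent (P := P) hX hp hz le_rfl zero_le_one
      have hle : ∀ ω, 0 ≤ 1 - Real.exp (1 * chernoffExponent p z 0 (X ω)) := fun ω => by
        rw [sub_nonneg, Real.exp_le_one_iff, e0, one_mul, neg_nonpos]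
        positivity
      have h1 : 0 < ∫ ω, (1 - Real.exp (1 * chernoffExponent p z 0 (X ω))) ∂P := by
        rw [integral_pos_iff_support_of_nonneg hle ((integrable_const 1).sub hi)]
        refine hpos.trans_le (measure_mono fun ω hω => ?_)
        have h0 : 0 < |X ω| := abs_pos.2 (show 0 < X ω from hω).ne'
        rw [Function.mem_support, e0, one_mul]
        refine (sub_pos.2 (Real.exp_lt_one_iff.2 (neg_neg_of_pos ?_))).ne'
        positivity
      rw [integral_sub (integrable_const 1) hi] at h1
      simp only [integral_const, probReal_univ, smul_eq_mul, mul_one] at h1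
      linarith
    · obtain ⟨t, ht, h⟩ := exists_mgf_lt_one (P := P) hX hp hz hc' hpos hz1
      exact ⟨t, ht.le, h⟩
  have hcont : ∀ C t, 0 ≤ C → 0 ≤ t → ContinuousOn
      (fun c => ∫ ω, Real.exp (t * chernoffExponent p z c (X ω)) ∂P) (Set.Icc 0 C) := by
    intro C t hC ht
    obtain ⟨K, hK, h⟩ := chernoffExponent_le hp hz C hC
    refine continuousOn_of_dominated (bound := fun _ => Real.exp (t * K))
      (fun c _ => ((measurable_chernoffExponent hX z c hp).const_mul t).exp.aestronglyMeasurable)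
      (fun c hc => ae_of_all _ fun ω => ?_) (integrable_const _)
      (ae_of_all _ fun ω => ?_)
    · rw [Real.norm_eq_abs, Real.abs_exp]
      exact Real.exp_le_exp.2 (mul_le_mul_of_nonneg_left (h c hc.1 hc.2 _) ht)
    · exact (Real.continuous_exp.comp
        ((continuous_chernoffExponent_left z (X ω) hp).const_mul t)).continuousOn
  have hlt : Real.exp (-(z / p * (p - 1))) < 1 := Real.exp_lt_one_iff.2 (neg_neg_of_pos (by positivity))
  obtain ⟨r₁, hr₁, hr₁'⟩ := exists_between hlt
  obtain ⟨M, hM0, hM⟩ : ∃ M : ℝ, 0 ≤ M ∧ ∀ c, M ≤ c →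
      ∫ ω, Real.exp (c ^ (-(p / (p - 1))) * chernoffExponent p z c (X ω)) ∂P < r₁ := by
    have h1 := (tendsto_mgf_atTop (P := P) hX hp hz).eventually (gt_mem_nhds hr₁)
    obtain ⟨M, hM⟩ := eventually_atTop.1 h1
    exact ⟨max M 0, le_max_right _ _, fun c hc => hM c ((le_max_left _ _).trans hc)⟩
  have hcomp : ∃ r : ℝ, r < 1 ∧ ∀ c ∈ Set.Icc 0 M, ∃ t, 0 ≤ t ∧
      ∫ ω, Real.exp (t * chernoffExponent p z c (X ω)) ∂P ≤ r := by
    refine isCompact_Icc.induction_on (p := fun S : Set ℝ => ∃ r : ℝ, r < 1 ∧ ∀ c ∈ S, ∃ t, 0 ≤ t ∧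
      ∫ ω, Real.exp (t * chernoffExponent p z c (X ω)) ∂P ≤ r) ?_ ?_ ?_ ?_
    · exact ⟨0, one_pos, fun c hc => absurd hc (Set.notMem_empty c)⟩
    · rintro S T hST ⟨r, hr, h⟩
      exact ⟨r, hr, fun c hc => h c (hST hc)⟩
    · rintro S T ⟨r, hr, h⟩ ⟨r', hr', h'⟩
      refine ⟨max r r', max_lt hr hr', fun c hc => ?_⟩
      rcases hc with hc | hc
      · obtain ⟨t, ht, h2⟩ := h c hc
        exact ⟨t, ht, h2.trans (le_max_left _ _)⟩
      · obtain ⟨t, ht, h2⟩ := h' c hc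
        exact ⟨t, ht, h2.trans (le_max_right _ _)⟩
    · intro c hc
      obtain ⟨t, ht, h⟩ := hpt c hc.1
      obtain ⟨r, h1, h2⟩ := exists_between h
      have h3 := (hcont M t hM0 ht c hc).eventually (gt_mem_nhds h1)
      exact ⟨_, h3, r, h2, fun c' hc' => ⟨t, ht, le_of_lt hc'⟩⟩
  obtain ⟨r₂, hr₂, h₂⟩ := hcomp
  refine ⟨max r₁ r₂, lt_max_of_lt_left ((Real.exp_pos _).trans hr₁), max_lt hr₁' hr₂,
    fun c hc => ?_⟩
  rcases le_total c M with h | h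
  · obtain ⟨t, ht, h3⟩ := h₂ c ⟨hc, h⟩
    exact ⟨t, ht, h3.trans (le_max_right _ _)⟩
  · exact ⟨c ^ (-(p / (p - 1))), by positivity, (hM c h).le.trans (le_max_left _ _)⟩

end Measure

/-- Since `z < 1`, choosing `c = x₀^{p-1}` for `x₀ > 0` in the support of `X` makes `W_c` positive
at `x₀`, hence with positive probability. -/
lemma exists_pos_prob {Ω : Type*} [MeasurableSpace Ω] {P : Measure Ω}
    {X : Ω → ℝ} (hX : Measurable X) {p z : ℝ} (hp : 1 < p)
    (hz2 : z < 1) (hpos : 0 < P {ω | 0 < X ω}) :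
    ∃ c, 0 ≤ c ∧ P {ω | 0 < chernoffExponent p z c (X ω)} ≠ 0 := by
  have hp0 : 0 < p := by linarith
  have hp1 : 0 < p - 1 := by linarith
  have hs : (P.map X) (Set.Ioi 0) ≠ 0 := by
    rw [Measure.map_apply hX measurableSet_Ioi]; exact hpos.ne'
  obtain ⟨x₀, hx₀, hx⟩ := exists_mem_forall_mem_nhdsWithin_pos_measure hs
  have hx0 : 0 < x₀ := hx₀
  refine ⟨x₀ ^ (p - 1), by positivity, ?_⟩
  have hval : 0 < chernoffExponent p z (x₀ ^ (p - 1)) x₀ := by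
    unfold chernoffExponent
    rw [← Real.rpow_mul hx0.le, abs_of_pos hx0, mul_div_cancel₀ _ hp1.ne']
    have e1 : x₀ ^ (p - 1) * x₀ = x₀ ^ p := by
      rw [← Real.rpow_add_one hx0.ne']; simp
    have e2 : z / p * (x₀ ^ p + (p - 1) * x₀ ^ p) = z * x₀ ^ p := by field_simp; ring
    rw [e1, e2]
    have : 0 < (1 - z) * x₀ ^ p := mul_pos (by linarith) (by positivity)
    linarith
  have hopen : IsOpen {x | 0 < chernoffExponent p z (x₀ ^ (p - 1)) x} :=
    isOpen_lt continuous_const (continuous_chernoffExponent _ _ hp)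
  have := hx _ (mem_nhdsWithin_of_mem_nhds (hopen.mem_nhds hval))
  rw [Measure.map_apply hX hopen.measurableSet] at this
  exact this.ne'

/-- Chernoff's bound in terms of the rate function: a point of the half-plane `H_c` has rate
at least `-ln E exp(t W_c)` for every `t ≥ 0`. -/
lemma neg_rate_le {Ω : Type*} [MeasurableSpace Ω] {P : Measure Ω} [IsProbabilityMeasure P]
    {X : Ω → ℝ} (hX : Measurable X) {p z c t : ℝ} (hp : 1 < p)
    (hz : 0 < z) (hc : 0 ≤ c) (ht : 0 ≤ t) {α : ℝ × ℝ}
    (hα : 0 ≤ c * α.1 - z / p * (α.2 + (p - 1) * c ^ (p / (p - 1)))) :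
    -(selfNormRate P X p α) ≤ ENNReal.log (∫⁻ ω, ENNReal.ofReal
        (Real.exp (t * chernoffExponent p z c (X ω))) ∂P) := by
  have hi := integrable_exp_chernoffExponent (P := P) hX hp hz hc ht
  rw [lintegral_exp_chernoffExponent hX hp hz hc ht]
  set f := ∫ ω, Real.exp (t * chernoffExponent p z c (X ω)) ∂P with hf
  have hfpos : 0 < f := integral_exp_pos hi
  set b := t * (z / p * ((p - 1) * c ^ (p / (p - 1)))) with hb
  have hA : selfNormCumulant P X p (t * c, -(t * (z / p)))
      = ((Real.log f + b : ℝ) : EReal) := by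
    have e : ∀ ω, Real.exp (t * c * X ω + -(t * (z / p)) * |X ω| ^ p)
        = Real.exp b * Real.exp (t * chernoffExponent p z c (X ω)) := fun ω => by
      rw [← Real.exp_add]; congr 1; unfold chernoffExponent; rw [hb]; ring
    unfold selfNormCumulant
    simp only [e]
    rw [← ofReal_integral_eq_lintegral_ofReal (hi.const_mul _)
      (ae_of_all _ fun ω => (mul_pos (Real.exp_pos _) (Real.exp_pos _)).le), integral_const_mul,
      ENNReal.log_ofReal_of_pos (by positivity), Real.log_mul (Real.exp_ne_zero _) hfpos.ne',
      Real.log_exp, add_comm]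
  rw [EReal.neg_le, ENNReal.log_ofReal_of_pos hfpos]
  refine le_trans ?_ (le_iSup _ ((t * c, -(t * (z / p))) : ℝ × ℝ))
  rw [hA, ← EReal.coe_sub, ← EReal.coe_neg, EReal.coe_le_coe_iff]
  have := mul_nonneg ht hα
  simp only [hb]
  linarith

/-- **Identification and finiteness of the limit constant.** For `p > 1`, `P(X > 0) > 0`,
the law of `X` not concentrated on at most two points, and `max(z*,0) < z < 1`:
`J_z = −inf_{α ∈ B_z} Λ(α)` and `J_z ∈ (−∞, 0)`. -/
theorem Jz_eq_neg_inf_rate_and_finite_negative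
    {Ω : Type*} [MeasurableSpace Ω] (P : Measure Ω) [IsProbabilityMeasure P]
    (X : Ω → ℝ) (hmeas : Measurable X)
    (hpos : 0 < P {ω | 0 < X ω})
    (hnondeg : ¬ ∃ a b : ℝ, ∀ᵐ ω ∂P, X ω = a ∨ X ω = b)
    (p : ℝ) (hp : 1 < p)
    (z : ℝ)
    (hz1 : max (if Integrable (fun ω => |X ω| ^ p) P
        then (∫ ω, X ω ∂P) * (∫ ω, |X ω| ^ p ∂P) ^ (-(1 / p)) else 0) 0 < z)
    (hz2 : z < 1) :
    (⨆ c : {c : ℝ // 0 ≤ c}, ⨅ t : {t : ℝ // 0 ≤ t},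
          ENNReal.log (∫⁻ ω, ENNReal.ofReal
            (Real.exp ((t : ℝ) * ((c : ℝ) * X ω -
              z / p * (|X ω| ^ p + (p - 1) * (c : ℝ) ^ (p / (p - 1)))))) ∂P))
        = -(⨅ α ∈ {x : ℝ × ℝ | 0 ≤ x.2 ∧ z * x.2 ^ (1 / p) ≤ x.1}, selfNormRate P X p α)
      ∧ (⊥ : EReal) < (⨆ c : {c : ℝ // 0 ≤ c}, ⨅ t : {t : ℝ // 0 ≤ t},
          ENNReal.log (∫⁻ ω, ENNReal.ofReal
            (Real.exp ((t : ℝ) * ((c : ℝ) * X ω -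
              z / p * (|X ω| ^ p + (p - 1) * (c : ℝ) ^ (p / (p - 1)))))) ∂P))
      ∧ (⨆ c : {c : ℝ // 0 ≤ c}, ⨅ t : {t : ℝ // 0 ≤ t},
          ENNReal.log (∫⁻ ω, ENNReal.ofReal
            (Real.exp ((t : ℝ) * ((c : ℝ) * X ω -
              z / p * (|X ω| ^ p + (p - 1) * (c : ℝ) ^ (p / (p - 1)))))) ∂P))
        < 0 := by
  have hz : 0 < z := (le_max_right _ _).trans_lt hz1
  have hz1' : Integrable (fun ω => |X ω| ^ p) P →
      (∫ ω, X ω ∂P) * (∫ ω, |X ω| ^ p ∂P) ^ (-(1 / p)) < z := fun hi => by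
    have := (le_max_left _ _).trans_lt hz1
    rwa [if_pos hi] at this
  have key : (⨆ c : {c : ℝ // 0 ≤ c}, ⨅ t : {t : ℝ // 0 ≤ t},
          ENNReal.log (∫⁻ ω, ENNReal.ofReal
            (Real.exp ((t : ℝ) * chernoffExponent p z c (X ω))) ∂P))
        = -(⨅ α ∈ {x : ℝ × ℝ | 0 ≤ x.2 ∧ z * x.2 ^ (1 / p) ≤ x.1}, selfNormRate P X p α)
      ∧ (⊥ : EReal) < (⨆ c : {c : ℝ // 0 ≤ c}, ⨅ t : {t : ℝ // 0 ≤ t},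
          ENNReal.log (∫⁻ ω, ENNReal.ofReal
            (Real.exp ((t : ℝ) * chernoffExponent p z c (X ω))) ∂P))
      ∧ (⨆ c : {c : ℝ // 0 ≤ c}, ⨅ t : {t : ℝ // 0 ≤ t},
          ENNReal.log (∫⁻ ω, ENNReal.ofReal
            (Real.exp ((t : ℝ) * chernoffExponent p z c (X ω))) ∂P))
        < 0 := by
    refine ⟨le_antisymm ?_ ?_, ?_, ?_⟩
    · refine iSup_le fun ⟨c, hc⟩ => ?_
      by_cases hW : P {ω | 0 < chernoffExponent p z c (X ω)} = 0
      · exact hard_of_null hmeas hp hz hc hW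
      · have hc' : 0 < c := by
          refine hc.lt_of_ne fun h0 => hW ?_
          have : {ω | 0 < chernoffExponent p z c (X ω)} = ∅ := by
            ext ω
            simp only [Set.mem_ofPred_eq, Set.mem_empty_iff_false, iff_false, not_lt]
            unfold chernoffExponent
            have hp0 : 0 < p := by linarith
            have hp1 : 0 < p - 1 := by linarith
            rw [← h0, Real.zero_rpow (div_pos hp0 hp1).ne', zero_mul, mul_zero, add_zero,
              zero_sub, neg_nonpos]
            positivity
          rw [this, measure_empty]
        obtain ⟨t, ht, α, hα, hr⟩ := hard_of_pos hmeas hp hz hc' hpos hz1' hW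
        refine (iInf_le _ (⟨t, ht⟩ : {t : ℝ // 0 ≤ t})).trans ?_
        simp only
        rw [lintegral_exp_chernoffExponent hmeas hp hz hc ht, ENNReal.log_ofReal_of_pos
          (integral_exp_pos (integrable_exp_chernoffExponent hmeas hp hz hc ht)), EReal.le_neg]
        refine (iInf₂_le α hα).trans (hr.trans ?_)
        rw [EReal.coe_neg]
    · rw [EReal.neg_le]
      refine le_iInf₂ fun α hα => ?_
      rw [EReal.neg_le]
      obtain ⟨c, hc, h⟩ := exists_halfplane hp hα.1 hα.2
      refine le_trans ?_ (le_iSup _ (⟨c, hc⟩ : {c : ℝ // 0 ≤ c}))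
      exact le_iInf fun t => neg_rate_le hmeas hp hz hc t.2 h
    · obtain ⟨c, hc, h⟩ := exists_pos_prob (P := P) hmeas hp hz2 hpos
      refine lt_of_lt_of_le ?_ (le_iSup _ (⟨c, hc⟩ : {c : ℝ // 0 ≤ c}))
      refine lt_of_lt_of_le (b := ENNReal.log (P {ω | 0 < chernoffExponent p z c (X ω)})) ?_ ?_
      · rw [bot_lt_iff_ne_bot, Ne, ENNReal.log_eq_bot_iff]; exact h
      · refine le_iInf fun ⟨t, ht⟩ => ENNReal.log_le_log ?_
        have hm : MeasurableSet {ω | 0 < chernoffExponent p z c (X ω)} :=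
          measurable_chernoffExponent hmeas z c hp measurableSet_Ioi
        rw [← lintegral_indicator_one hm]
        refine lintegral_mono fun ω => ?_
        by_cases hω : ω ∈ {ω | 0 < chernoffExponent p z c (X ω)}
        · rw [Set.indicator_of_mem hω]
          simp only [Pi.one_apply, ENNReal.one_le_ofReal, Real.one_le_exp_iff]
          exact mul_nonneg ht (le_of_lt hω)
        · rw [Set.indicator_of_notMem hω]; exact zero_le
    · obtain ⟨r, hr0, hr1, h⟩ := exists_uniform_mgf_bound (P := P) hmeas hp hz hpos hz1'
      refine lt_of_le_of_lt (b := ((Real.log r : ℝ) : EReal)) (iSup_le fun ⟨c, hc⟩ => ?_) ?_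
      · obtain ⟨t, ht, hle⟩ := h c hc
        refine (iInf_le _ (⟨t, ht⟩ : {t : ℝ // 0 ≤ t})).trans ?_
        simp only
        rw [lintegral_exp_chernoffExponent hmeas hp hz hc ht, ← ENNReal.log_ofReal_of_pos hr0]
        exact ENNReal.log_le_log (ENNReal.ofReal_le_ofReal hle)
      · exact_mod_cast Real.log_neg hr0 hr1
  exact key
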